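/- Let ℓ^1,…,ℓ^N : ℝ^n → ℝ be differentiable, with ℓ^i μᵢ-strongly convex (μᵢ > 0) and Lᵢ-smooth, and let x*ⁱ be the global minimizer of ℓ^i. Then the DiBS vector field h(x) = Σ_{i=1}^N d_i(x) is Lipschitz continuous on ℝ^n with constant L_h = Σ_{i=1}^N (1 + 2Lᵢ/μᵢ). -/

import Mathlib

open scoped RealInnerProductSpace BigOperators Classical

/-- The DiBS vector field: `h(x) = ∑ i, ‖x − x*ⁱ‖ · ∇ℓⁱ(x)/‖∇ℓⁱ(x)‖`,
with the `i`-th summand taken to be `0` whenever `∇ℓⁱ(x) = 0`. -/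
noncomputable def dibsField {n N : ℕ} (ℓ : Fin N → EuclideanSpace ℝ (Fin n) → ℝ)
    (xstar : Fin N → EuclideanSpace ℝ (Fin n)) (x : EuclideanSpace ℝ (Fin n)) :
    EuclideanSpace ℝ (Fin n) :=
  ∑ i, if gradient (ℓ i) x ≠ 0 then
    (‖x - xstar i‖ / ‖gradient (ℓ i) x‖) • gradient (ℓ i) x else 0

lemma dibs_grad_lower {n : ℕ} (f : EuclideanSpace ℝ (Fin n) → ℝ) (m : ℝ) (hm : 0 < m)
    (hd : Differentiable ℝ f)
    (hc : ConvexOn ℝ Set.univ (fun x => f x - m / 2 * ‖x‖ ^ 2))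
    (z : EuclideanSpace ℝ (Fin n)) (hz : ∀ y, f z ≤ f y) (x : EuclideanSpace ℝ (Fin n)) :
    m * ‖x - z‖ ≤ ‖gradient f x‖ := by
  set v := x - z with hv
  have hline : ∀ t : ℝ, HasDerivAt (fun t : ℝ => z + t • v) v t := fun t => by
    simpa using ((hasDerivAt_id t).smul_const v).const_add z
  have hder : ∀ t : ℝ, HasDerivAt (fun t : ℝ => f (z + t • v) - m / 2 * ‖z + t • v‖ ^ 2)
      (⟪gradient f (z + t • v), v⟫ - m / 2 * (2 * ⟪z + t • v, v⟫)) t := fun t => by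
    have h1 := ((hd (z + t • v)).hasGradientAt.hasFDerivAt).comp_hasDerivAt t (hline t)
    have h2 := (hline t).norm_sq
    exact h1.sub (h2.const_mul (m / 2))
  have hconv : ConvexOn ℝ Set.univ (fun t : ℝ => f (z + t • v) - m / 2 * ‖z + t • v‖ ^ 2) := by
    have := hc.comp_affineMap (AffineMap.lineMap z x : ℝ →ᵃ[ℝ] EuclideanSpace ℝ (Fin n))
    have he : (fun x => f x - m / 2 * ‖x‖ ^ 2) ∘
        (AffineMap.lineMap z x : ℝ →ᵃ[ℝ] EuclideanSpace ℝ (Fin n)) =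
        (fun t : ℝ => f (z + t • v) - m / 2 * ‖z + t • v‖ ^ 2) := by
      funext t
      simp [AffineMap.lineMap_apply, hv, add_comm]
    rw [he, Set.preimage_univ] at this
    exact this
  have h0 := hconv.le_slope_of_hasDerivAt (Set.mem_univ 0) (Set.mem_univ 1) one_pos (hder 0)
  have h1 := hconv.slope_le_of_hasDerivAt (Set.mem_univ 0) (Set.mem_univ 1) one_pos (hder 1)
  have h2 := h0.trans h1
  have hg : gradient f z = 0 := by
    have : fderiv ℝ f z = 0 := IsLocalMin.fderiv_eq_zero (Filter.Eventually.of_forall hz)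
    simp [gradient, this]
  simp only [zero_smul, add_zero, one_smul, hg, inner_zero_left, inner_add_left,
    real_inner_self_eq_norm_sq] at h2
  have hx : z + v = x := by simp [hv]
  rw [hx] at h2
  have h3 := real_inner_le_norm (gradient f x) v
  rcases (norm_nonneg v).eq_or_lt with h | h
  · rw [← h]; simp
  · refine le_of_mul_le_mul_right ?_ h
    nlinarith

lemma dibs_term {n : ℕ} (p q x y z : EuclideanSpace ℝ (Fin n)) (m L : ℝ) (hm : 0 < m)
    (hp : m * ‖x - z‖ ≤ ‖p‖) (hq : m * ‖y - z‖ ≤ ‖q‖) (hL : ‖p - q‖ ≤ L * ‖x - y‖) :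
    ‖(‖x - z‖ / ‖p‖) • p - (‖y - z‖ / ‖q‖) • q‖ ≤ (1 + 2 * L / m) * ‖x - y‖ := by
  have key : ∀ w r : EuclideanSpace ℝ (Fin n), m * ‖w‖ ≤ ‖r‖ → ‖w‖ / ‖r‖ * ‖r‖ = ‖w‖ := by
    intro w r h
    rcases eq_or_ne ‖r‖ 0 with h0 | h0
    · have : ‖w‖ = 0 := by
        rw [h0] at h
        nlinarith [norm_nonneg w]
      simp [this]
    · field_simp
  have ha := key _ _ hp
  have hb := key _ _ hq
  set c := ‖y - z‖ / ‖q‖ with hc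
  set e := ‖x - z‖ / ‖p‖
  have hc0 : 0 ≤ c := by positivity
  have hc1 : c ≤ 1 / m := by
    rw [le_div_iff₀ hm]
    exact (by rw [hc, div_mul_eq_mul_div, mul_comm]; exact div_le_one_of_le₀ hq (norm_nonneg _))
  have hs : e • p - c • q = (e - c) • p + c • (p - q) := by module
  have h1 : |e - c| * ‖p‖ ≤ ‖x - y‖ + c * ‖p - q‖ := by
    rw [← abs_of_nonneg (norm_nonneg p), ← abs_mul]
    have e1 : (e - c) * ‖p‖ = (‖x - z‖ - ‖y - z‖) + c * (‖q‖ - ‖p‖) := by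
      linear_combination ha - hb
    rw [e1]
    refine (abs_add_le _ _).trans (add_le_add ?_ ?_)
    · simpa using abs_norm_sub_norm_le (x - z) (y - z)
    · rw [abs_mul, abs_of_nonneg hc0]
      refine mul_le_mul_of_nonneg_left ?_ hc0
      rw [norm_sub_rev]; exact abs_norm_sub_norm_le q p
  have h2 : c * ‖p - q‖ ≤ 1 / m * (L * ‖x - y‖) :=
    mul_le_mul hc1 hL (norm_nonneg _) (by positivity)
  rw [hs]
  calc _ ≤ |e - c| * ‖p‖ + c * ‖p - q‖ := by
        refine (norm_add_le _ _).trans_eq ?_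
        rw [norm_smul, norm_smul, Real.norm_eq_abs, Real.norm_eq_abs, abs_of_nonneg hc0]
    _ ≤ ‖x - y‖ + 2 * (1 / m * (L * ‖x - y‖)) := by linarith
    _ = _ := by ring

theorem dibs_field_lipschitz {n N : ℕ}
    (ℓ : Fin N → EuclideanSpace ℝ (Fin n) → ℝ) (μ L : Fin N → ℝ)
    (hμ : ∀ i, 0 < μ i)
    (hdiff : ∀ i, Differentiable ℝ (ℓ i))
    (hsc : ∀ i, ConvexOn ℝ Set.univ (fun x => ℓ i x - μ i / 2 * ‖x‖ ^ 2))
    (hsmooth : ∀ i, ∀ x y, ‖gradient (ℓ i) x - gradient (ℓ i) y‖ ≤ L i * ‖x - y‖)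
    (xstar : Fin N → EuclideanSpace ℝ (Fin n))
    (hmin : ∀ i, ∀ y, ℓ i (xstar i) ≤ ℓ i y) :
    ∀ x y : EuclideanSpace ℝ (Fin n),
      ‖dibsField ℓ xstar x - dibsField ℓ xstar y‖ ≤
        (∑ i, (1 + 2 * L i / μ i)) * ‖x - y‖ := by
  intro x y
  have hif : ∀ i w, (if gradient (ℓ i) w ≠ 0 then
    (‖w - xstar i‖ / ‖gradient (ℓ i) w‖) • gradient (ℓ i) w else 0) =
    (‖w - xstar i‖ / ‖gradient (ℓ i) w‖) • gradient (ℓ i) w := by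
    intro i w
    split_ifs with h
    · rfl
    · rw [not_not.mp h, smul_zero]
  simp only [dibsField, hif]
  rw [← Finset.sum_sub_distrib, Finset.sum_mul]
  refine norm_sum_le_of_le _ fun i _ => ?_
  have hg := dibs_grad_lower (ℓ i) (μ i) (hμ i) (hdiff i) (hsc i) (xstar i) (hmin i)
  exact dibs_term _ _ x y _ _ _ (hμ i) (hg x) (hg y) (hsmooth i x y)
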